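/- arXiv:1904.09283 — 3 statements merged into one kernel-verified Lean document; each statement's English description precedes it below -/
import Mathlib

section
/- For all natural numbers d and r with r ≥ 4, setting k = ⌊r/2⌋, one has ⌈d/k⌉ + k ≤ (5/2)·(⌈d/r⌉ + r) (as an inequality of real numbers). -/
/-!
Passing from `r` to `k = ⌊r/2⌋` loses a factor `r / k ≤ 5/2` (attained at `r = 5`) in the quotient
`d / r`, while the rounding error in `⌈d/k⌉`, which is less than one, is absorbed by the additive
term, since `k + 1` is well below `5/2 * r`.
-/

section CeilDiv

variable {K : Type*} [Field K] [LinearOrder K] [IsStrictOrderedRing K] [FloorSemiring K]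
  {a k r c : K}

lemma div_le_mul_natCeil_div (hk : 0 < k) (hr : 0 < r) (hrk : r ≤ c * k) :
    a / k ≤ c * ⌈a / r⌉₊ := by
  rw [div_le_iff₀ hk]
  calc
    a ≤ ⌈a / r⌉₊ * r := (div_le_iff₀ hr).mp (Nat.le_ceil _)
    _ ≤ ⌈a / r⌉₊ * (c * k) := by gcongr
    _ = c * ⌈a / r⌉₊ * k := by ring

theorem kway_halving_bound_general (ha : 0 ≤ a) (hk : 0 < k) (hr : 0 < r) (hrk : r ≤ c * k)
    (hkr : k + 1 ≤ c * r) :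
    ⌈a / k⌉₊ + k ≤ c * (⌈a / r⌉₊ + r) :=
  calc
    ⌈a / k⌉₊ + k ≤ (a / k + 1) + k := by
      gcongr
      exact (Nat.ceil_lt_add_one (div_nonneg ha hk.le)).le
    _ = a / k + (k + 1) := by ring
    _ ≤ c * ⌈a / r⌉₊ + c * r := add_le_add (div_le_mul_natCeil_div hk hr hrk) hkr
    _ = c * (⌈a / r⌉₊ + r) := by ring

end CeilDiv

lemma natCast_le_five_halves_mul_half {r : ℕ} (hr : 4 ≤ r) :
    (r : ℝ) ≤ 5 / 2 * (r / 2 : ℕ) := by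
  have h : (2 * r : ℝ) ≤ 5 * (r / 2 : ℕ) := by exact_mod_cast (by lia : 2 * r ≤ 5 * (r / 2))
  linarith

lemma natCast_half_add_one_le_five_halves_mul {r : ℕ} (hr : 1 ≤ r) :
    ((r / 2 : ℕ) : ℝ) + 1 ≤ 5 / 2 * r := by
  have h : (r / 2 : ℕ) + (1 : ℝ) ≤ 2 * r := by exact_mod_cast (by lia : r / 2 + 1 ≤ 2 * r)
  linarith

/-- For all natural numbers `d` and `r` with `r ≥ 4`, setting `k = ⌊r/2⌋`, one has
`⌈d/k⌉ + k ≤ (5/2)·(⌈d/r⌉ + r)` as an inequality of real numbers, where `⌈·⌉` is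
ceiling division. -/
theorem kway_halving_bound (d r : ℕ) (hr : 4 ≤ r) :
    ((⌈(d : ℝ) / (r / 2 : ℕ)⌉₊ + (r / 2 : ℕ) : ℕ) : ℝ) ≤
      (5 / 2) * ((⌈(d : ℝ) / r⌉₊ + r : ℕ) : ℝ) := by
  simp only [Nat.cast_add]
  exact kway_halving_bound_general d.cast_nonneg (Nat.cast_pos.mpr (by lia))
    (Nat.cast_pos.mpr (by lia)) (natCast_le_five_halves_mul_half hr)
    (natCast_half_add_one_le_five_halves_mul (by lia))
end

section
/- Let x ≥ 2 and i ≥ 1 be integers such that (i + 1 : ℝ) ≤ log₂ x − log₂ log₂ e. For each integer j ≥ 1, set t_j = ⌈x/2^j⌉ + j + 1 (a natural number, with ⌈·⌉ ceiling division). Then, as real numbers, t_i/(2^(i−2)·x) + Σ_{j=1}^{i+1} t_i/(2^(i−j−1)·t_j) < 14, where 2^(i−2) and 2^(i−j−1) denote real powers of 2 with (possibly negative) integer exponents. -/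
open Real Finset

/-!
Write `F i` for the first summand together with the terms `j ≤ i` of the sum. Increasing `i` by one
halves every term, replaces the factor `t i` by `t (i + 1)` and adds a new term equal to `2`, so
`F (i + 1) = t (i + 1) / (2 * t i) * F i + 2`. Since `t (j + 1) ≤ t j + 1` and `3 ≤ t j`, durations
grow by a factor of at most `4 / 3` per step. Hence `F 1 < 6`, which holds for `x ≥ 2`, propagates
to all `i ≥ 1`: the bound `6` is the fixed point of `F ↦ 2 / 3 * F + 2`. The remaining term
`j = i + 1` equals `4 * t i / t (i + 1)`, which is at most `8` because doubling the extra space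
cannot do better than halve the duration.
-/

/-- The duration `t_j` of recursive binary splitting with `2 ^ j` units of extra space, for a job of
real base duration `x`. -/
noncomputable def splitDuration (x : ℝ) (j : ℕ) : ℕ := ⌈x / 2 ^ j⌉₊ + j + 1

/-- The quantity `F i` of the proof: the sum to be bounded without its term `j = i + 1`, for an
arbitrary sequence `t` of durations. Unlike the full sum, it satisfies a linear
recurrence in `i`. -/
noncomputable def dyadicRatioSum (x : ℝ) (t : ℕ → ℝ) (i : ℕ) : ℝ :=
  t i / ((2 : ℝ) ^ ((i : ℤ) - 2) * x) +
    ∑ j ∈ Icc 1 i, t i / ((2 : ℝ) ^ ((i : ℤ) - (j : ℤ) - 1) * t j)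

section DyadicRatioSum

variable {x q B : ℝ} {t : ℕ → ℝ} {i : ℕ}

lemma dyadicRatioSum_one (h₁ : t 1 ≠ 0) : dyadicRatioSum x t 1 = 2 * t 1 / x + 2 := by
  have hexp : (1 : ℤ) - 2 = -1 := by norm_num
  simp only [dyadicRatioSum, Icc_self, sum_singleton, Nat.cast_one, hexp, sub_self, zero_sub,
    zpow_neg_one]
  field_simp

lemma dyadicRatioSum_succ (hi : t i ≠ 0) (hi' : t (i + 1) ≠ 0) :
    dyadicRatioSum x t (i + 1) = t (i + 1) / t i / 2 * dyadicRatioSum x t i + 2 := by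
  have hscale (n : ℤ) (y : ℝ) :
      t (i + 1) / ((2 : ℝ) ^ (n + 1) * y) = t (i + 1) / t i / 2 * (t i / ((2 : ℝ) ^ n * y)) := by
    rw [zpow_add_one₀ two_ne_zero]
    field_simp
  have hfirst : ((i + 1 : ℕ) : ℤ) - 2 = (i : ℤ) - 2 + 1 := by push_cast; ring
  have hterm (j : ℕ) : ((i + 1 : ℕ) : ℤ) - (j : ℤ) - 1 = (i : ℤ) - (j : ℤ) - 1 + 1 := by
    push_cast; ring
  have hnew : t (i + 1) / ((2 : ℝ) ^ (((i + 1 : ℕ) : ℤ) - ((i + 1 : ℕ) : ℤ) - 1) * t (i + 1)) =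
      2 := by
    rw [sub_self, zero_sub, zpow_neg_one]
    field_simp
  rw [dyadicRatioSum, sum_Icc_succ_top (Nat.le_add_left 1 i), hnew, dyadicRatioSum, mul_add,
    mul_sum, hfirst, hscale, ← add_assoc]
  simp only [hterm, hscale]

lemma dyadicRatioSum_lt (hx : 0 < x) (hpos : ∀ j, 1 ≤ j → 0 < t j)
    (hgrowth : ∀ j, 1 ≤ j → t (j + 1) ≤ q * t j) (hB : q / 2 * B + 2 ≤ B)
    (hbase : 2 * t 1 / x + 2 < B) (hi : 1 ≤ i) : dyadicRatioSum x t i < B := by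
  have hB₀ : 0 < B := by
    have := hpos 1 le_rfl
    exact lt_trans (by positivity) hbase
  induction i, hi using Nat.le_induction with
  | base => rwa [dyadicRatioSum_one (hpos 1 le_rfl).ne']
  | succ i hi ih =>
    have hti := hpos i hi
    have hti' := hpos (i + 1) (Nat.le_add_left 1 i)
    have hratio : t (i + 1) / t i ≤ q := (div_le_iff₀ hti).2 (hgrowth i hi)
    calc
      dyadicRatioSum x t (i + 1) = t (i + 1) / t i / 2 * dyadicRatioSum x t i + 2 :=
        dyadicRatioSum_succ hti.ne' hti'.ne'
      _ < t (i + 1) / t i / 2 * B + 2 := by gcongr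
      _ ≤ q / 2 * B + 2 := by gcongr
      _ ≤ B := hB

end DyadicRatioSum

section SplitDuration

variable {x : ℝ} {j : ℕ}

lemma splitDuration_pos (x : ℝ) (j : ℕ) : 0 < splitDuration x j := Nat.succ_pos _

lemma three_le_splitDuration (hx : 0 < x) (hj : 1 ≤ j) : 3 ≤ splitDuration x j := by
  have hceil : 0 < ⌈x / 2 ^ j⌉₊ := Nat.ceil_pos.2 (by positivity)
  rw [splitDuration]
  omega

lemma splitDuration_succ_le_add_one (hx : 0 ≤ x) (j : ℕ) :
    splitDuration x (j + 1) ≤ splitDuration x j + 1 := by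
  have hceil : ⌈x / 2 ^ (j + 1)⌉₊ ≤ ⌈x / 2 ^ j⌉₊ := by
    gcongr
    · exact one_le_two
    · exact Nat.le_succ j
  rw [splitDuration, splitDuration]
  omega

lemma splitDuration_succ_le_four_thirds_mul (hx : 0 < x) (hj : 1 ≤ j) :
    (splitDuration x (j + 1) : ℝ) ≤ 4 / 3 * splitDuration x j := by
  have hsucc : (splitDuration x (j + 1) : ℝ) ≤ splitDuration x j + 1 :=
    mod_cast splitDuration_succ_le_add_one hx.le j
  have hthree : (3 : ℝ) ≤ splitDuration x j := mod_cast three_le_splitDuration hx hj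
  linarith

lemma splitDuration_le_two_mul_succ (x : ℝ) (j : ℕ) :
    splitDuration x j ≤ 2 * splitDuration x (j + 1) := by
  have hceil : ⌈x / 2 ^ j⌉₊ ≤ 2 * ⌈x / 2 ^ (j + 1)⌉₊ := by
    refine Nat.ceil_le.2 ?_
    calc
      x / 2 ^ j = 2 * (x / 2 ^ (j + 1)) := by rw [pow_succ]; field_simp
      _ ≤ 2 * ⌈x / 2 ^ (j + 1)⌉₊ := by gcongr; exact Nat.le_ceil _
      _ = (2 * ⌈x / 2 ^ (j + 1)⌉₊ : ℕ) := by push_cast; rfl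
  rw [splitDuration, splitDuration]
  omega

lemma splitDuration_one_lt (hx : 0 ≤ x) : (splitDuration x 1 : ℝ) < x / 2 + 3 := by
  have hceil : (⌈x / 2 ^ 1⌉₊ : ℝ) < x / 2 ^ 1 + 1 := Nat.ceil_lt_add_one (by positivity)
  rw [splitDuration]
  push_cast
  linarith

lemma dyadicRatioSum_splitDuration_lt_six {i : ℕ} (hx : 2 ≤ x) (hi : 1 ≤ i) :
    dyadicRatioSum x (fun j ↦ splitDuration x j) i < 6 := by
  have hx₀ : 0 < x := by linarith
  refine dyadicRatioSum_lt (q := 4 / 3) hx₀ (fun j _ ↦ mod_cast splitDuration_pos x j)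
    (fun j hj ↦ splitDuration_succ_le_four_thirds_mul hx₀ hj) (by norm_num) ?_ hi
  have hbase : 2 * (splitDuration x 1 : ℝ) / x < 4 := by
    rw [div_lt_iff₀ hx₀]
    linarith [splitDuration_one_lt hx₀.le]
  linarith

lemma splitDuration_div_succ_le_eight (x : ℝ) (i : ℕ) :
    (splitDuration x i : ℝ) /
      ((2 : ℝ) ^ ((i : ℤ) - ((i + 1 : ℕ) : ℤ) - 1) * splitDuration x (i + 1)) ≤ 8 := by
  have hpos : (0 : ℝ) < splitDuration x (i + 1) := mod_cast splitDuration_pos x (i + 1)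
  have hdouble : (splitDuration x i : ℝ) ≤ 2 * splitDuration x (i + 1) :=
    mod_cast splitDuration_le_two_mul_succ x i
  have hexp : (i : ℤ) - ((i + 1 : ℕ) : ℤ) - 1 = -2 := by push_cast; ring
  have hquarter : (2 : ℝ) ^ (-2 : ℤ) = 1 / 4 := by norm_num
  rw [hexp, hquarter, div_le_iff₀ (by positivity)]
  linarith

end SplitDuration

theorem binary_split_sum_lt_14_general {x : ℝ} {i : ℕ} (hx : 2 ≤ x) (hi : 1 ≤ i) :
    (splitDuration x i : ℝ) / ((2 : ℝ) ^ ((i : ℤ) - 2) * x) +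
      ∑ j ∈ Finset.Icc 1 (i + 1),
        (splitDuration x i : ℝ) /
          ((2 : ℝ) ^ ((i : ℤ) - (j : ℤ) - 1) * (splitDuration x j : ℝ)) < 14 := by
  have hhead := dyadicRatioSum_splitDuration_lt_six hx hi
  have hlast := splitDuration_div_succ_le_eight x i
  rw [dyadicRatioSum] at hhead
  rw [sum_Icc_succ_top (Nat.le_add_left 1 i)]
  linarith

/-- Let `x ≥ 2` and `i ≥ 1` be integers with `(i+1 : ℝ) ≤ log₂ x − log₂ log₂ e`, and let
`t j = ⌈x/2^j⌉ + j + 1` for `j ≥ 1`.  Then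
`t i/(2^(i−2)·x) + Σ_{j=1}^{i+1} t i/(2^(i−j−1)·t j) < 14` (real powers of `2` with
possibly negative integer exponents). -/
theorem binary_split_sum_lt_14 (x i : ℕ) (hx : 2 ≤ x) (hi : 1 ≤ i)
    (hik : ((i : ℝ) + 1) ≤ logb 2 x - logb 2 (logb 2 (exp 1)))
    (t : ℕ → ℕ) (ht : ∀ j, 1 ≤ j → t j = ⌈(x : ℝ) / 2 ^ j⌉₊ + j + 1) :
    (t i : ℝ) / ((2 : ℝ) ^ ((i : ℤ) - 2) * x) +
      ∑ j ∈ Finset.Icc 1 (i + 1),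
        (t i : ℝ) / ((2 : ℝ) ^ ((i : ℤ) - (j : ℤ) - 1) * (t j : ℝ)) < 14 := by
  rw [ht i hi, sum_congr rfl fun j hj ↦ by rw [ht j (mem_Icc.1 hj).1]]
  exact binary_split_sum_lt_14_general (mod_cast hx) hi
end

section
/- Let x ≥ 2 and i ≥ 1 be integers such that (i + 1 : ℝ) ≤ log₂ x − log₂ log₂ e, and for each integer j ≥ 1 set t_j = ⌈x/2^j⌉ + j + 1 (with ⌈·⌉ ceiling division). Set t = (5/14)·t_i as a real number. Then 2·(1 − t/x) + Σ_{j=1}^{i+1} 2^j·(1 − t/t_j) ≥ 3·2^(i−1). -/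
/-!
Write `S n = 2 / x + ∑ j ∈ Icc 1 n, 2 ^ j / t j`, so that the resource needed for duration `s` is
`2 ^ (i + 2) - s * S (i + 1)`. Since `t (j + 1) ≤ t j + 1` and `3 ≤ t j`, the durations grow by a
factor of at most `4 / 3`, so the weights `2 ^ j / t j` grow by a factor of at least `3 / 2` and
`S i ≤ 3 * 2 ^ i / t i`. As `t i ≤ 2 * t (i + 1)`, the last term of `S (i + 1)` contributes at most
`4 * 2 ^ i / t i`. Hence `t i * S (i + 1) ≤ 7 * 2 ^ i`, and duration `c * t i` needs at least
`(4 - 7 * c) * 2 ^ i` units, which is `3 * 2 ^ (i - 1)` for `c = 5 / 14`.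
-/

open Real Finset

theorem add_sum_Icc_one_le_mul_of_mul_le_sub_one_mul {R : Type*} [Ring R] [PartialOrder R]
    [IsOrderedAddMonoid R] {a C : R} {w : ℕ → R} (ha : a ≤ (C - 1) * w 1)
    (hw : ∀ j, 1 ≤ j → C * w j ≤ (C - 1) * w (j + 1)) {n : ℕ} (hn : 1 ≤ n) :
    a + ∑ j ∈ Icc 1 n, w j ≤ C * w n := by
  have add_self_le {b : R} {k : ℕ} (h : b ≤ (C - 1) * w k) : b + w k ≤ C * w k := by
    simpa [sub_mul] using add_le_add_left h (w k)
  induction n, hn using Nat.le_induction with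
  | base => simpa using add_self_le ha
  | succ n hn ih =>
    rw [sum_Icc_succ_top (by lia), ← add_assoc]
    exact add_self_le (ih.trans (hw n hn))

theorem sum_Icc_one_two_pow {R : Type*} [Ring R] (n : ℕ) :
    ∑ j ∈ Icc 1 n, (2 : R) ^ j = 2 ^ (n + 1) - 2 := by
  induction n with
  | zero => simp
  | succ n ih =>
    rw [sum_Icc_succ_top (by lia), ih, pow_succ 2 (n + 1), mul_two]
    abel

/-- The duration `t_j` of recursive binary splitting with `2 ^ j` units of extra space, for a job of
base duration `x`, which is allowed to be real. -/
noncomputable def splittingDuration (x : ℝ) (j : ℕ) : ℕ := ⌈x / 2 ^ j⌉₊ + j + 1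

/-- The total resource which the linear relaxation spends to finish a job of base duration `x`
within duration `s`: `1 - s / x` on each of the two top edges, and `2 ^ j * (1 - s / t_j)` on the
chain of each level `j = 1, …, n`. The terms are not truncated at `0`. -/
noncomputable def relaxedResource (x : ℝ) (n : ℕ) (s : ℝ) : ℝ :=
  2 * (1 - s / x) + ∑ j ∈ Icc 1 n, (2 : ℝ) ^ j * (1 - s / splittingDuration x j)

theorem relaxedResource_eq_two_pow_sub_mul (x : ℝ) (n : ℕ) (s : ℝ) :
    relaxedResource x n s =
      2 ^ (n + 1) - s * (2 / x + ∑ j ∈ Icc 1 n, (2 : ℝ) ^ j / splittingDuration x j) := by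
  have sum_eq : ∑ j ∈ Icc 1 n, (2 : ℝ) ^ j * (1 - s / splittingDuration x j) =
      (2 ^ (n + 1) - 2) - s * ∑ j ∈ Icc 1 n, (2 : ℝ) ^ j / splittingDuration x j := by
    rw [← sum_Icc_one_two_pow, mul_sum, ← sum_sub_distrib]
    exact sum_congr rfl fun j _ => by ring
  rw [relaxedResource, sum_eq]
  ring

theorem splittingDuration_cast_pos (x : ℝ) (j : ℕ) : (0 : ℝ) < splittingDuration x j :=
  Nat.cast_pos.2 (Nat.succ_pos _)

theorem three_le_splittingDuration {x : ℝ} (hx : 0 < x) {j : ℕ} (hj : 1 ≤ j) :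
    3 ≤ splittingDuration x j := by
  have one_le_ceil : 0 < ⌈x / 2 ^ j⌉₊ := Nat.ceil_pos.2 (by positivity)
  unfold splittingDuration
  lia

theorem splittingDuration_succ_le_add_one {x : ℝ} (hx : 0 ≤ x) (j : ℕ) :
    splittingDuration x (j + 1) ≤ splittingDuration x j + 1 := by
  have ceil_le : ⌈x / 2 ^ (j + 1)⌉₊ ≤ ⌈x / 2 ^ j⌉₊ := by
    gcongr <;> norm_num
  unfold splittingDuration
  lia

theorem three_mul_splittingDuration_succ_le {x : ℝ} (hx : 0 < x) {j : ℕ} (hj : 1 ≤ j) :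
    3 * splittingDuration x (j + 1) ≤ 4 * splittingDuration x j := by
  have := splittingDuration_succ_le_add_one hx.le j
  have := three_le_splittingDuration hx hj
  lia

theorem splittingDuration_le_two_mul_succ (x : ℝ) (j : ℕ) :
    splittingDuration x j ≤ 2 * splittingDuration x (j + 1) := by
  have ceil_le : ⌈x / 2 ^ j⌉₊ ≤ 2 * ⌈x / 2 ^ (j + 1)⌉₊ := by
    rw [Nat.ceil_le]
    calc x / 2 ^ j = 2 * (x / 2 ^ (j + 1)) := by rw [pow_succ]; field_simp
      _ ≤ 2 * ⌈x / 2 ^ (j + 1)⌉₊ := by gcongr; exact Nat.le_ceil _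
      _ = (2 * ⌈x / 2 ^ (j + 1)⌉₊ : ℕ) := by push_cast; rfl
  unfold splittingDuration
  lia

theorem splittingDuration_one_le_two_mul {x : ℝ} (hx : 2 ≤ x) :
    (splittingDuration x 1 : ℝ) ≤ 2 * x := by
  have ceil_lt : (⌈x / 2 ^ 1⌉₊ : ℝ) < x / 2 ^ 1 + 1 := Nat.ceil_lt_add_one (by positivity)
  unfold splittingDuration
  push_cast
  linarith

theorem two_div_add_sum_two_pow_div_splittingDuration_le {x : ℝ} (hx : 2 ≤ x) {n : ℕ}
    (hn : 1 ≤ n) :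
    2 / x + ∑ j ∈ Icc 1 n, (2 : ℝ) ^ j / splittingDuration x j ≤
      3 * (2 ^ n / splittingDuration x n) := by
  have pos := splittingDuration_cast_pos x
  refine add_sum_Icc_one_le_mul_of_mul_le_sub_one_mul ?_ (fun j hj => ?_) hn
  · have := splittingDuration_one_le_two_mul hx
    have := pos 1
    rw [← mul_div_assoc, div_le_div_iff₀ (by positivity) this]
    linarith
  · have growth : (3 : ℝ) * splittingDuration x (j + 1) ≤ 4 * splittingDuration x j :=
      mod_cast three_mul_splittingDuration_succ_le (by linarith) hj
    rw [← mul_div_assoc, ← mul_div_assoc, div_le_div_iff₀ (pos j) (pos (j + 1))]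
    calc 3 * 2 ^ j * (splittingDuration x (j + 1) : ℝ)
        = 2 ^ j * (3 * splittingDuration x (j + 1)) := by ring
      _ ≤ 2 ^ j * (4 * splittingDuration x j) := by gcongr
      _ = (3 - 1) * 2 ^ (j + 1) * splittingDuration x j := by ring

theorem splittingDuration_mul_two_div_add_sum_le {x : ℝ} (hx : 2 ≤ x) {i : ℕ} (hi : 1 ≤ i) :
    splittingDuration x i *
      (2 / x + ∑ j ∈ Icc 1 (i + 1), (2 : ℝ) ^ j / splittingDuration x j) ≤ 7 * 2 ^ i := by
  have pos := splittingDuration_cast_pos x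
  have initial : splittingDuration x i *
      (2 / x + ∑ j ∈ Icc 1 i, (2 : ℝ) ^ j / splittingDuration x j) ≤ 3 * 2 ^ i := by
    rw [← le_div_iff₀' (pos i), mul_div_assoc]
    exact two_div_add_sum_two_pow_div_splittingDuration_le hx hi
  have last : splittingDuration x i * ((2 : ℝ) ^ (i + 1) / splittingDuration x (i + 1)) ≤
      4 * 2 ^ i := by
    have halving : (splittingDuration x i : ℝ) ≤ 2 * splittingDuration x (i + 1) :=
      mod_cast splittingDuration_le_two_mul_succ x i
    rw [← mul_div_assoc, div_le_iff₀ (pos (i + 1))]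
    calc (splittingDuration x i : ℝ) * 2 ^ (i + 1)
        ≤ 2 * splittingDuration x (i + 1) * 2 ^ (i + 1) := by gcongr
      _ = 4 * 2 ^ i * splittingDuration x (i + 1) := by ring
  rw [sum_Icc_succ_top (by lia), ← add_assoc, mul_add]
  linarith

theorem binary_time_resource_lower_bound_general {x : ℝ} (hx : 2 ≤ x) {i : ℕ} (hi : 1 ≤ i)
    {c : ℝ} (hc : 0 ≤ c) :
    (4 - 7 * c) * 2 ^ i ≤ relaxedResource x (i + 1) (c * splittingDuration x i) := by
  rw [relaxedResource_eq_two_pow_sub_mul, mul_assoc c]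
  calc (4 - 7 * c) * (2 : ℝ) ^ i = 2 ^ (i + 1 + 1) - c * (7 * 2 ^ i) := by ring
    _ ≤ _ := by grw [splittingDuration_mul_two_div_add_sum_le hx hi]

/-- Let `x ≥ 2` and `i ≥ 1` be integers with `(i+1 : ℝ) ≤ log₂ x − log₂ log₂ e`, let
`t j = ⌈x/2^j⌉ + j + 1` for `j ≥ 1`, and set `t = (5/14)·t i`.  Then
`2·(1 − t/x) + Σ_{j=1}^{i+1} 2^j·(1 − t/t j) ≥ 3·2^(i−1)`. -/
theorem binary_time_resource_lower_bound (x i : ℕ) (hx : 2 ≤ x) (hi : 1 ≤ i)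
    (hik : ((i : ℝ) + 1) ≤ logb 2 x - logb 2 (logb 2 (exp 1)))
    (tf : ℕ → ℕ) (htf : ∀ j, 1 ≤ j → tf j = ⌈(x : ℝ) / 2 ^ j⌉₊ + j + 1)
    (t : ℝ) (ht : t = (5 / 14) * (tf i : ℝ)) :
    2 * (1 - t / (x : ℝ)) +
      ∑ j ∈ Finset.Icc 1 (i + 1), (2 : ℝ) ^ j * (1 - t / (tf j : ℝ)) ≥
      3 * (2 : ℝ) ^ ((i : ℤ) - 1) := by
  have sum_eq : ∑ j ∈ Icc 1 (i + 1), (2 : ℝ) ^ j * (1 - t / tf j) =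
      ∑ j ∈ Icc 1 (i + 1), (2 : ℝ) ^ j * (1 - t / splittingDuration x j) :=
    sum_congr rfl fun j hj => by rw [htf j (mem_Icc.1 hj).1, splittingDuration]
  calc 3 * (2 : ℝ) ^ ((i : ℤ) - 1) = (4 - 7 * (5 / 14)) * 2 ^ i := by
        rw [zpow_sub_one₀ two_ne_zero, zpow_natCast]; ring
    _ ≤ relaxedResource x (i + 1) (5 / 14 * splittingDuration x i) :=
        binary_time_resource_lower_bound_general (mod_cast hx) hi (by norm_num)
    _ = _ := by rw [splittingDuration, ← htf i hi, ← ht, relaxedResource, sum_eq]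
end
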